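/- Let f : ℝ → ℝ be a Schwartz function. Then lim_{ℓ → 0⁺} ℓ^{−3} ∫_{ℝ} ∫_{ℝ} (f(x + y) − f(x))² / (cosh(y/ℓ) + 1) dx dy = (2π²/3) ∫_{ℝ} f′(x)² dx. -/

import Mathlib

open Real MeasureTheory Filter

/-!
The difference quotient `D_h f` averages `f'` over a segment, so Jensen's inequality and
translation invariance give `‖D_h f‖_p ≤ ‖f'‖_p`; Fatou's lemma gives the reverse inequality as
`h → 0`. Substituting `y = ℓ t` turns the rescaled form with kernel `k` into
`∫ t ^ 2 k(t) ‖D_{ℓ t} f‖_2 ^ 2 dt`, which converges to `(∫ t ^ 2 k(t) dt) ‖f'‖_2 ^ 2` by dominated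
convergence. For `k = 1 / (cosh + 1)`, expanding in powers of `e ^ (-t)` and integrating term by
term gives the moment `2 · 4 · ∑ (-1) ^ (n + 1) / n ^ 2 = 8 · π ^ 2 / 12`.
-/

open scoped ENNReal Topology

lemma integral_norm_sq_eq_toReal_eLpNorm_two_sq {α E : Type*} [MeasurableSpace α] {μ : Measure α}
    [NormedAddCommGroup E] {g : α → E} (hg : AEStronglyMeasurable g μ) :
    ∫ x, ‖g x‖ ^ 2 ∂μ = (eLpNorm g 2 μ).toReal ^ 2 := by
  have hint : 0 ≤ ∫ x, ‖g x‖ ^ 2 ∂μ := integral_nonneg fun x => sq_nonneg _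
  rw [toReal_eLpNorm hg, lpNorm_eq_integral_norm_rpow_toReal two_ne_zero ENNReal.ofNat_ne_top hg]
  simp only [ENNReal.toReal_ofNat, Real.rpow_two]
  rw [← Real.rpow_mul_natCast hint]
  norm_num

lemma lintegral_rpow_le_lintegral_rpow {α : Type*} [MeasurableSpace α] {μ : Measure α}
    [IsProbabilityMeasure μ] {u : α → ℝ≥0∞} (hu : AEMeasurable u μ) {r : ℝ} (hr : 1 ≤ r) :
    (∫⁻ a, u a ∂μ) ^ r ≤ ∫⁻ a, u a ^ r ∂μ := by
  have := eLpNorm'_le_eLpNorm'_of_exponent_le zero_lt_one hr μ hu.aestronglyMeasurable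
  rw [eLpNorm', eLpNorm'] at this
  simpa using (ENNReal.le_rpow_inv_iff (by linarith)).1 (by simpa using this)

section DifferenceQuotient

variable {E : Type*} [NormedAddCommGroup E] [NormedSpace ℝ E]

/-- The difference quotient `x ↦ (f (x + h) - f x) / h` of `f` with step `h`; it is zero for
`h = 0`. -/
noncomputable def diffQuotient (f : ℝ → E) (h x : ℝ) : E := h⁻¹ • (f (x + h) - f x)

lemma norm_sub_sq_eq_sq_mul_norm_diffQuotient_sq (f : ℝ → E) (h x : ℝ) :
    ‖f (x + h) - f x‖ ^ 2 = h ^ 2 * ‖diffQuotient f h x‖ ^ 2 := by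
  rcases eq_or_ne h 0 with rfl | hh
  · simp
  · rw [diffQuotient, norm_smul, norm_inv, Real.norm_eq_abs, mul_pow, inv_pow, sq_abs,
      mul_inv_cancel_left₀ (pow_ne_zero 2 hh)]

lemma tendsto_diffQuotient {f : ℝ → E} {x : ℝ} (hf : DifferentiableAt ℝ f x) :
    Tendsto (fun h => diffQuotient f h x) (𝓝[≠] 0) (𝓝 (deriv f x)) :=
  hasDerivAt_iff_tendsto_slope_zero.1 hf.hasDerivAt

lemma continuous_diffQuotient {f : ℝ → E} (hf : Continuous f) (h : ℝ) :
    Continuous (diffQuotient f h) := by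
  unfold diffQuotient
  fun_prop

lemma stronglyMeasurable_integral_norm_diffQuotient_sq {f : ℝ → E} (hf : Continuous f) :
    StronglyMeasurable fun h => ∫ x, ‖diffQuotient f h x‖ ^ 2 := by
  have hinv : StronglyMeasurable fun z : ℝ × ℝ => z.1⁻¹ := measurable_fst.inv.stronglyMeasurable
  have hsub : StronglyMeasurable fun z : ℝ × ℝ => f (z.2 + z.1) - f z.2 :=
    Continuous.stronglyMeasurable (by fun_prop)
  exact ((hinv.smul hsub).norm.pow 2).integral_prod_right

variable [CompleteSpace E]

lemma enorm_sub_le_lintegral_enorm_deriv {f : ℝ → E} (hf : Differentiable ℝ f) {a b : ℝ}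
    (hab : a ≤ b) : ‖f b - f a‖ₑ ≤ ∫⁻ t in Set.Ioc a b, ‖deriv f t‖ₑ := by
  by_cases hfin : ∫⁻ t in Set.Ioc a b, ‖deriv f t‖ₑ = ∞
  · simp [hfin]
  have hint : IntegrableOn (deriv f) (Set.Ioc a b) :=
    ⟨aestronglyMeasurable_deriv f _, lt_top_iff_ne_top.2 hfin⟩
  rw [← intervalIntegral.integral_eq_sub_of_hasDerivAt (fun t _ => hf.differentiableAt.hasDerivAt)
    ((intervalIntegrable_iff_integrableOn_Ioc_of_le hab).2 hint),
    intervalIntegral.integral_of_le hab]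
  exact enorm_integral_le_lintegral_enorm _

lemma enorm_diffQuotient_le {f : ℝ → E} (hf : Differentiable ℝ f) (h x : ℝ) :
    ‖diffQuotient f h x‖ₑ ≤ ∫⁻ s in Set.Ioc (0 : ℝ) 1, ‖deriv f (x + s * h)‖ₑ := by
  rcases eq_or_ne h 0 with rfl | hh
  · simp [diffQuotient]
  let γ : ℝ → E := fun s => h⁻¹ • f (x + s * h)
  have hγ (s : ℝ) : HasDerivAt γ (deriv f (x + s * h)) s := by
    have hline : HasDerivAt (fun s => x + s * h) h s := by
      simpa using ((hasDerivAt_id s).mul_const h).const_add x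
    have := (hf.differentiableAt.hasDerivAt.scomp s hline).const_smul h⁻¹
    rwa [inv_smul_smul₀ hh] at this
  have hFTC := enorm_sub_le_lintegral_enorm_deriv
    (fun s => (hγ s).differentiableAt) (zero_le_one (α := ℝ))
  simpa [γ, diffQuotient, ← smul_sub, fun s => (hγ s).deriv] using hFTC

lemma eLpNorm_diffQuotient_le {f : ℝ → E} (hf : Differentiable ℝ f) (h : ℝ) {p : ℝ≥0∞}
    (hp : 1 ≤ p) (hp_top : p ≠ ∞) :
    eLpNorm (diffQuotient f h) p ≤ eLpNorm (deriv f) p := by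
  have hp_zero : p ≠ 0 := (zero_lt_one.trans_le hp).ne'
  have hr : 1 ≤ p.toReal := by simpa using ENNReal.toReal_mono hp_top hp
  have hmeas : Measurable fun x => ‖deriv f x‖ₑ := (stronglyMeasurable_deriv f).enorm
  have hprob : IsProbabilityMeasure (volume.restrict (Set.Ioc (0 : ℝ) 1)) := ⟨by simp⟩
  rw [eLpNorm_eq_lintegral_rpow_enorm_toReal hp_zero hp_top,
    eLpNorm_eq_lintegral_rpow_enorm_toReal hp_zero hp_top]
  gcongr ?_ ^ _
  calc ∫⁻ x, ‖diffQuotient f h x‖ₑ ^ p.toReal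
    _ ≤ ∫⁻ x, (∫⁻ s in Set.Ioc (0 : ℝ) 1, ‖deriv f (x + s * h)‖ₑ) ^ p.toReal := by
      gcongr with x
      exact enorm_diffQuotient_le hf h x
    _ ≤ ∫⁻ x, ∫⁻ s in Set.Ioc (0 : ℝ) 1, ‖deriv f (x + s * h)‖ₑ ^ p.toReal := by
      gcongr with x
      exact lintegral_rpow_le_lintegral_rpow (hmeas.comp (by fun_prop)).aemeasurable hr
    _ = ∫⁻ s in Set.Ioc (0 : ℝ) 1, ∫⁻ x, ‖deriv f (x + s * h)‖ₑ ^ p.toReal :=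
      lintegral_lintegral_swap ((hmeas.comp (by fun_prop)).pow_const _).aemeasurable
    _ = ∫⁻ x, ‖deriv f x‖ₑ ^ p.toReal := by
      simp only [lintegral_add_right_eq_self (fun x => ‖deriv f x‖ₑ ^ p.toReal)]
      simp

lemma tendsto_eLpNorm_diffQuotient {f : ℝ → E} (hf : Differentiable ℝ f) {p : ℝ≥0∞}
    (hp : 1 ≤ p) (hp_top : p ≠ ∞) :
    Tendsto (fun h => eLpNorm (diffQuotient f h) p) (𝓝[≠] 0) (𝓝 (eLpNorm (deriv f) p)) := by
  refine tendsto_of_seq_tendsto fun h hh => ?_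
  have hlower : eLpNorm (deriv f) p ≤ liminf (fun n => eLpNorm (diffQuotient f (h n)) p) atTop :=
    Lp.eLpNorm_lim_le_liminf_eLpNorm
      (fun n => (continuous_diffQuotient hf.continuous (h n)).aestronglyMeasurable) _
      (ae_of_all _ fun x => (tendsto_diffQuotient (hf x)).comp hh)
  have hupper : limsup (fun n => eLpNorm (diffQuotient f (h n)) p) atTop ≤ eLpNorm (deriv f) p :=
    limsup_le_of_le (h := .of_forall fun n => eLpNorm_diffQuotient_le hf (h n) hp hp_top)
  exact tendsto_of_le_liminf_of_limsup_le hlower hupper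

lemma integral_norm_diffQuotient_sq_le {f : ℝ → E} (hf : Differentiable ℝ f)
    (hf' : MemLp (deriv f) 2) (h : ℝ) :
    ∫ x, ‖diffQuotient f h x‖ ^ 2 ≤ ∫ x, ‖deriv f x‖ ^ 2 := by
  rw [integral_norm_sq_eq_toReal_eLpNorm_two_sq hf'.aestronglyMeasurable,
    integral_norm_sq_eq_toReal_eLpNorm_two_sq
      (continuous_diffQuotient hf.continuous h).aestronglyMeasurable]
  gcongr
  · exact hf'.eLpNorm_ne_top
  · exact eLpNorm_diffQuotient_le hf h one_le_two ENNReal.ofNat_ne_top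

lemma tendsto_integral_norm_diffQuotient_sq {f : ℝ → E} (hf : Differentiable ℝ f)
    (hf' : MemLp (deriv f) 2) :
    Tendsto (fun h => ∫ x, ‖diffQuotient f h x‖ ^ 2) (𝓝[≠] 0) (𝓝 (∫ x, ‖deriv f x‖ ^ 2)) := by
  have hnorm := (ENNReal.tendsto_toReal hf'.eLpNorm_ne_top).comp
    (tendsto_eLpNorm_diffQuotient hf one_le_two ENNReal.ofNat_ne_top)
  rw [integral_norm_sq_eq_toReal_eLpNorm_two_sq hf'.aestronglyMeasurable]
  simpa only [Function.comp_def, integral_norm_sq_eq_toReal_eLpNorm_two_sq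
    (continuous_diffQuotient hf.continuous _).aestronglyMeasurable] using hnorm.pow 2

end DifferenceQuotient

section Rescaling

lemma tendsto_integral_smul_comp_smul {V E : Type*} [NormedAddCommGroup V] [NormedSpace ℝ V]
    [MeasurableSpace V] [BorelSpace V] {μ : Measure V} [NullSingletonClass μ]
    [NormedAddCommGroup E] [NormedSpace ℝ E] [CompleteSpace E] {w : V → ℝ} (hw : Integrable w μ)
    {g : V → E} (hg : StronglyMeasurable g) {C : ℝ} (hC : ∀ v, ‖g v‖ ≤ C) {a : E}
    (ha : Tendsto g (𝓝[≠] 0) (𝓝 a)) :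
    Tendsto (fun ε : ℝ => ∫ v, w v • g (ε • v) ∂μ) (𝓝[≠] 0) (𝓝 ((∫ v, w v ∂μ) • a)) := by
  rw [← integral_smul_const]
  refine tendsto_integral_filter_of_dominated_convergence (fun v => ‖w v‖ * C)
    (.of_forall fun ε =>
      hw.1.smul (hg.comp_measurable (measurable_const_smul ε)).aestronglyMeasurable)
    (.of_forall fun ε => ae_of_all _ fun v => ?_) (hw.norm.mul_const C) ?_
  · rw [norm_smul]
    gcongr
    exact hC _
  · filter_upwards [Measure.ae_ne μ 0] with v hv
    have hscale : Tendsto (fun ε : ℝ => ε • v) (𝓝[≠] 0) (𝓝[≠] 0) := by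
      refine tendsto_nhdsWithin_iff.2 ⟨?_, ?_⟩
      · exact (Continuous.tendsto' (by fun_prop) 0 0 (zero_smul ℝ v)).mono_left nhdsWithin_le_nhds
      · filter_upwards [self_mem_nhdsWithin] with ε hε
        exact smul_ne_zero hε hv
    exact (ha.comp hscale).const_smul (w v)

lemma integral_comp_div_mul_pow_mul (k g : ℝ → ℝ) (n : ℕ) {ℓ : ℝ} (hℓ : 0 < ℓ) :
    ∫ y, k (y / ℓ) * (y ^ n * g y) = ℓ ^ (n + 1) * ∫ t, t ^ n * k t * g (ℓ * t) := by
  have hscale := Measure.integral_comp_div (fun t => k t * ((ℓ * t) ^ n * g (ℓ * t))) ℓ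
  simp only [mul_div_cancel₀ _ hℓ.ne', abs_of_pos hℓ, smul_eq_mul] at hscale
  rw [hscale, pow_succ', mul_assoc, ← integral_const_mul (ℓ ^ n)]
  congr 2 with t
  ring

end Rescaling

theorem tendsto_rescaled_jump_form {E : Type*} [NormedAddCommGroup E] [NormedSpace ℝ E]
    [CompleteSpace E] {f : ℝ → E} (hf : Differentiable ℝ f) (hf' : MemLp (deriv f) 2)
    {k : ℝ → ℝ} (hk : Integrable fun t => t ^ 2 * k t) :
    Tendsto (fun ℓ : ℝ => ℓ ^ (-3 : ℤ) * ∫ y, ∫ x, k (y / ℓ) * ‖f (x + y) - f x‖ ^ 2)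
      (𝓝[>] 0) (𝓝 ((∫ t, t ^ 2 * k t) * ∫ x, ‖deriv f x‖ ^ 2)) := by
  let D : ℝ → ℝ := fun h => ∫ x, ‖diffQuotient f h x‖ ^ 2
  have hD_le (h : ℝ) : ‖D h‖ ≤ ∫ x, ‖deriv f x‖ ^ 2 := by
    rw [Real.norm_of_nonneg (integral_nonneg fun x => sq_nonneg _)]
    exact integral_norm_diffQuotient_sq_le hf hf' h
  have hlim : Tendsto (fun ℓ => ∫ t, t ^ 2 * k t * D (ℓ * t)) (𝓝[>] 0)
      (𝓝 ((∫ t, t ^ 2 * k t) * ∫ x, ‖deriv f x‖ ^ 2)) :=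
    (tendsto_integral_smul_comp_smul hk
      (stronglyMeasurable_integral_norm_diffQuotient_sq hf.continuous) hD_le
      (tendsto_integral_norm_diffQuotient_sq hf hf')).mono_left (nhdsGT_le_nhdsNE 0)
  refine hlim.congr' ?_
  filter_upwards [self_mem_nhdsWithin] with ℓ (hℓ : 0 < ℓ)
  simp only [norm_sub_sq_eq_sq_mul_norm_diffQuotient_sq, integral_const_mul]
  rw [integral_comp_div_mul_pow_mul k D 2 hℓ, ← mul_assoc, ← zpow_natCast, ← zpow_add₀ hℓ.ne']
  simp

section CoshMoment

open scoped Nat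

lemma hasSum_neg_one_pow_succ_div_sq :
    HasSum (fun n : ℕ => (-1 : ℝ) ^ (n + 1) / (n : ℝ) ^ 2) (π ^ 2 / 12) := by
  have hcos (n : ℕ) : cos (2 * π * n * (1 / 2)) = (-1) ^ n := by
    rw [← cos_nat_mul_pi]
    ring_nf
  have hFourier := hasSum_one_div_nat_pow_mul_cos one_ne_zero (x := 1 / 2) (by norm_num)
  have hbernoulli : (Polynomial.map (algebraMap ℚ ℝ) (Polynomial.bernoulli 2)).eval (1 / 2) =
      -(1 / 12) := by
    norm_num [Polynomial.bernoulli, Finset.sum_range_succ, bernoulli]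
  simp only [hcos] at hFourier
  convert! hFourier.neg using 1
  · funext n
    ring
  · rw [mul_one, hbernoulli]
    norm_num [Nat.factorial]
    ring

lemma hasSum_inv_cosh_add_one {t : ℝ} (ht : 0 < t) :
    HasSum (fun n : ℕ => 2 * (-1) ^ (n + 1) * n * rexp (-(n * t))) (cosh t + 1)⁻¹ := by
  have hr : ‖-rexp (-t)‖ < 1 := by
    rw [norm_neg, Real.norm_of_nonneg (exp_pos _).le]
    exact Real.exp_lt_one_iff.2 (by linarith)
  convert! (hasSum_coe_mul_geometric_of_norm_lt_one hr).mul_left (-2) using 1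
  · funext n
    rw [neg_pow (rexp (-t)), ← Real.exp_nat_mul]
    ring_nf
  · rw [cosh_eq, Real.exp_neg, sub_neg_eq_add]
    have := exp_pos t
    field_simp
    ring

lemma hasSum_integral_pow_mul_of_hasSum_exp {ι : Type*} [Countable ι] {a p : ι → ℝ} {F : ℝ → ℝ}
    (hp : ∀ i, a i = 0 ∨ 0 < p i)
    (hF : ∀ t ∈ Set.Ioi (0 : ℝ), HasSum (fun i => a i * rexp (-(p i * t))) (F t))
    {k : ℕ} (hsum : Summable fun i => |a i| / p i ^ (k + 1)) :
    HasSum (fun i => k ! * (a i / p i ^ (k + 1))) (∫ t in Set.Ioi (0 : ℝ), t ^ k * F t) := by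
  have hmellin := hasSum_mellin (a := fun i => (a i : ℂ)) (F := fun t => (F t : ℂ))
    (s := (k + 1 : ℕ)) (fun i => (hp i).imp_left (by simp +contextual))
    (by simp only [Complex.natCast_re]; positivity)
    (fun t ht => by simpa [neg_mul] using Complex.hasSum_ofReal.2 (hF t ht))
    (by simpa only [Complex.natCast_re, rpow_natCast, Complex.norm_real, Real.norm_eq_abs]
      using hsum)
  have hintegral : mellin (fun t => (F t : ℂ)) (k + 1 : ℕ) =
      ((∫ t in Set.Ioi (0 : ℝ), t ^ k * F t : ℝ) : ℂ) := by
    simp [mellin, ← integral_complex_ofReal]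
  rw [← Complex.hasSum_ofReal, ← hintegral]
  convert hmellin using 2 with i
  rw [Complex.cpow_natCast, Nat.cast_succ, Complex.Gamma_nat_eq_factorial]
  push_cast
  ring

lemma hasSum_integral_pow_mul_inv_cosh_add_one_Ioi {k : ℕ} (hk : 2 ≤ k) :
    HasSum (fun n : ℕ => 2 * k ! * ((-1) ^ (n + 1) / (n : ℝ) ^ k))
      (∫ t in Set.Ioi (0 : ℝ), t ^ k * (cosh t + 1)⁻¹) := by
  have hcancel (n : ℕ) (c : ℝ) : c * n / n ^ (k + 1) = c / (n : ℝ) ^ k := by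
    rcases eq_or_ne n 0 with rfl | hn
    · simp [(zero_lt_two.trans_le hk).ne']
    · field_simp
      ring
  have hsum : Summable fun n : ℕ => |2 * (-1) ^ (n + 1) * (n : ℝ)| / (n : ℝ) ^ (k + 1) := by
    simpa [abs_mul, hcancel, div_eq_mul_inv] using (Real.summable_nat_pow_inv.2 hk).mul_left 2
  convert! hasSum_integral_pow_mul_of_hasSum_exp
    (fun n => n.eq_zero_or_pos.imp (by simp +contextual) Nat.cast_pos.2)
    (fun t ht => hasSum_inv_cosh_add_one ht) hsum using 2 with n
  rw [hcancel]
  ring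

lemma integral_sq_mul_inv_cosh_add_one :
    ∫ t : ℝ, t ^ 2 * (cosh t + 1)⁻¹ = 2 * π ^ 2 / 3 := by
  have habs := integral_comp_abs (f := fun t : ℝ => t ^ 2 * (cosh t + 1)⁻¹)
  have hhalf := (hasSum_integral_pow_mul_inv_cosh_add_one_Ioi le_rfl).unique
    (hasSum_neg_one_pow_succ_div_sq.mul_left (2 * (2 ! : ℝ)))
  simp only [sq_abs, cosh_abs] at habs
  rw [habs, hhalf, Nat.factorial_two]
  push_cast
  ring

lemma integrable_sq_mul_inv_cosh_add_one :
    Integrable fun t : ℝ => t ^ 2 * (cosh t + 1)⁻¹ :=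
  .of_integral_ne_zero (by rw [integral_sq_mul_inv_cosh_add_one]; positivity)

end CoshMoment

theorem strip_jump_form_cosh_add_one_limit_general {E : Type*} [NormedAddCommGroup E]
    [NormedSpace ℝ E] [CompleteSpace E] {f : ℝ → E} (hf : Differentiable ℝ f)
    (hf' : MemLp (deriv f) 2) :
    Tendsto
      (fun ℓ : ℝ => ℓ ^ (-3 : ℤ) * ∫ y : ℝ, ∫ x : ℝ, ‖f (x + y) - f x‖ ^ 2 / (cosh (y / ℓ) + 1))
      (𝓝[>] 0) (𝓝 ((2 * π ^ 2 / 3) * ∫ x : ℝ, ‖deriv f x‖ ^ 2)) := by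
  simpa only [integral_sq_mul_inv_cosh_add_one, inv_mul_eq_div] using
    tendsto_rescaled_jump_form hf hf' integrable_sq_mul_inv_cosh_add_one

theorem strip_jump_form_cosh_add_one_limit (f : SchwartzMap ℝ ℝ) :
    Filter.Tendsto
      (fun ℓ : ℝ =>
        ℓ ^ (-3 : ℤ) * ∫ y : ℝ, ∫ x : ℝ, (f (x + y) - f x) ^ 2 / (Real.cosh (y / ℓ) + 1))
      (nhdsWithin 0 (Set.Ioi 0))
      (nhds ((2 * π ^ 2 / 3) * ∫ x : ℝ, (deriv (⇑f) x) ^ 2)) := by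
  simpa only [Real.norm_eq_abs, sq_abs] using
    strip_jump_form_cosh_add_one_limit_general f.differentiable
      ((SchwartzMap.derivCLM ℝ ℝ f).memLp 2 volume)
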